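/- arXiv:2010.08194 — 3 statements merged into one kernel-verified Lean document; each statement's English description precedes it below -/
import Mathlib

section
/- Let 0 < s < 1 and define I_s := (1/π²)·∫_{B(0,1)}∫_{B(0,1)} |x - x'|^{-2(1-s)} dx dx' over the unit ball in ℝ². Then 1/6 ≤ s·I_s ≤ 1. -/
open Real MeasureTheory

lemma aux_pow (s : ℝ) (hs0 : 0 < s) (R : ℝ) :
    Set.EqOn (fun y : ℝ => y ^ (2 - 1) • (Set.Iio R).indicator (fun r : ℝ => r ^ (-(2 * (1 - s)))) y)
      ((Set.Iio R).indicator (fun r : ℝ => r ^ (2 * s - 1))) (Set.Ioi 0) := by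
  intro y hy
  have hy' : (0:ℝ) < y := hy
  by_cases h : y ∈ Set.Iio R
  · simp only [Set.indicator_of_mem h, smul_eq_mul]
    rw [show 2 * s - 1 = 1 + (-(2 * (1 - s))) by ring, Real.rpow_add hy']
    simp
  · simp [Set.indicator_of_notMem h]

lemma aux_ind (s R : ℝ) :
    (Metric.ball (0 : EuclideanSpace ℝ (Fin 2)) R).indicator (fun z => ‖z‖ ^ (-(2 * (1 - s))))
      = fun z => (Set.Iio R).indicator (fun r : ℝ => r ^ (-(2 * (1 - s)))) ‖z‖ := by
  classical
  ext z
  simp [Set.indicator_apply]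

lemma aux_integrable (s : ℝ) (hs0 : 0 < s) (R : ℝ) (hR : 0 ≤ R) :
    IntegrableOn (fun z : EuclideanSpace ℝ (Fin 2) => ‖z‖ ^ (-(2 * (1 - s)))) (Metric.ball 0 R) := by
  rw [← integrable_indicator_iff measurableSet_ball, aux_ind, integrable_fun_norm_addHaar]
  simp only [finrank_euclideanSpace, Fintype.card_fin]
  rw [integrableOn_congr_fun (aux_pow s hs0 R) measurableSet_Ioi]
  rw [IntegrableOn, integrable_indicator_iff measurableSet_Iio, IntegrableOn,
    Measure.restrict_restrict measurableSet_Iio, Set.inter_comm, Set.Ioi_inter_Iio]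
  have := (intervalIntegral.intervalIntegrable_rpow' (a := 0) (b := R) (r := 2 * s - 1) (by linarith))
  rw [intervalIntegrable_iff_integrableOn_Ioo_of_le hR] at this
  exact this

lemma aux_value (s : ℝ) (hs0 : 0 < s) (R : ℝ) (hR : 0 ≤ R) :
    ∫ z in Metric.ball (0 : EuclideanSpace ℝ (Fin 2)) R, ‖z‖ ^ (-(2 * (1 - s)))
      = π * R ^ (2 * s) / s := by
  rw [← integral_indicator measurableSet_ball, aux_ind, integral_fun_norm_addHaar]
  simp only [finrank_euclideanSpace, Fintype.card_fin]
  rw [setIntegral_congr_fun measurableSet_Ioi (aux_pow s hs0 R)]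
  rw [integral_indicator measurableSet_Iio,
    Measure.restrict_restrict measurableSet_Iio, Set.inter_comm, Set.Ioi_inter_Iio,
    ← integral_Ioc_eq_integral_Ioo, ← intervalIntegral.integral_of_le hR,
    integral_rpow (Or.inl (by linarith))]
  rw [show 2 * s - 1 + 1 = 2 * s by ring, Real.zero_rpow (by positivity)]
  simp [measureReal_def, EuclideanSpace.volume_ball_fin_two, ENNReal.toReal_ofReal Real.pi_pos.le, Real.pi_pos.le]
  field_simp

lemma aux_trans (s : ℝ) (R : ℝ) (x : EuclideanSpace ℝ (Fin 2)) :
    (Metric.ball x R).indicator (fun y => ‖x - y‖ ^ (-(2 * (1 - s))))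
    = fun y => (Metric.ball (0 : EuclideanSpace ℝ (Fin 2)) R).indicator
        (fun z => ‖z‖ ^ (-(2 * (1 - s)))) (x - y) := by
  classical
  ext y
  simp [Set.indicator_apply, dist_eq_norm, norm_sub_rev]

lemma aux_integrable' (s : ℝ) (hs0 : 0 < s) (R : ℝ) (hR : 0 ≤ R) (x : EuclideanSpace ℝ (Fin 2)) :
    IntegrableOn (fun y : EuclideanSpace ℝ (Fin 2) => ‖x - y‖ ^ (-(2 * (1 - s)))) (Metric.ball x R) := by
  rw [← integrable_indicator_iff measurableSet_ball, aux_trans]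
  exact ((integrable_indicator_iff measurableSet_ball).2 (aux_integrable s hs0 R hR)).comp_sub_left x

lemma aux_value' (s : ℝ) (hs0 : 0 < s) (R : ℝ) (hR : 0 ≤ R) (x : EuclideanSpace ℝ (Fin 2)) :
    ∫ y in Metric.ball x R, ‖x - y‖ ^ (-(2 * (1 - s))) = π * R ^ (2 * s) / s := by
  rw [← integral_indicator measurableSet_ball, aux_trans, integral_sub_left_eq_self
    ((Metric.ball (0 : EuclideanSpace ℝ (Fin 2)) R).indicator
        (fun z => ‖z‖ ^ (-(2 * (1 - s))))), integral_indicator measurableSet_ball,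
    aux_value s hs0 R hR]

lemma aux_int_B (s : ℝ) (hs0 : 0 < s) (x : EuclideanSpace ℝ (Fin 2)) (hx : ‖x‖ < 1) :
    IntegrableOn (fun y : EuclideanSpace ℝ (Fin 2) => ‖x - y‖ ^ (-(2 * (1 - s)))) (Metric.ball 0 1) := by
  refine (aux_integrable' s hs0 2 (by norm_num) x).mono_set (Metric.ball_subset_ball' ?_)
  rw [dist_zero_left]; linarith

lemma aux_lower (s : ℝ) (hs0 : 0 < s) (hs1 : s < 1) (x : EuclideanSpace ℝ (Fin 2)) (hx : ‖x‖ < 1) :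
    π / s * (1 - ‖x‖) ^ 2 ≤
    ∫ y in Metric.ball (0 : EuclideanSpace ℝ (Fin 2)) 1, ‖x - y‖ ^ (-(2 * (1 - s))) := by
  have h1 := aux_value' s hs0 (1 - ‖x‖) (by linarith) x
  have h2 : ∫ y in Metric.ball x (1 - ‖x‖), ‖x - y‖ ^ (-(2 * (1 - s))) ≤
      ∫ y in Metric.ball (0 : EuclideanSpace ℝ (Fin 2)) 1, ‖x - y‖ ^ (-(2 * (1 - s))) := by
    apply setIntegral_mono_set (aux_int_B s hs0 x hx)
    · exact Filter.Eventually.of_forall fun y => by positivity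
    · apply LE.le.eventuallyLE
      apply Metric.ball_subset_ball'
      rw [dist_zero_right]; linarith
  have h3 : (1 - ‖x‖) ^ 2 ≤ (1 - ‖x‖) ^ (2 * s) := by
    rw [← Real.rpow_natCast]
    apply Real.rpow_le_rpow_of_exponent_ge (by linarith) (by linarith [norm_nonneg x])
    push_cast; linarith
  calc π / s * (1 - ‖x‖) ^ 2 ≤ π / s * (1 - ‖x‖) ^ (2 * s) := by gcongr
    _ = π * (1 - ‖x‖) ^ (2 * s) / s := by ring
    _ ≤ _ := by rw [← h1]; exact h2

lemma aux_vol (x : EuclideanSpace ℝ (Fin 2)) : volume.real (Metric.ball x 1) = π := by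
  simp [measureReal_def, EuclideanSpace.volume_ball_fin_two, ENNReal.toReal_ofReal Real.pi_pos.le, Real.pi_pos.le]

lemma aux_upper (s : ℝ) (hs0 : 0 < s) (hs1 : s < 1) (x : EuclideanSpace ℝ (Fin 2)) (hx : ‖x‖ < 1) :
    ∫ y in Metric.ball (0 : EuclideanSpace ℝ (Fin 2)) 1, ‖x - y‖ ^ (-(2 * (1 - s))) ≤ π / s := by
  have h1 := aux_value' s hs0 1 zero_le_one x
  have i1 := aux_int_B s hs0 x hx
  have i2 := aux_integrable' s hs0 1 zero_le_one x
  have c (z : EuclideanSpace ℝ (Fin 2)) : IntegrableOn (fun _ : EuclideanSpace ℝ (Fin 2) => (1:ℝ)) (Metric.ball z 1) :=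
    integrableOn_const measure_ball_lt_top.ne
  have key : ∫ y in Metric.ball (0 : EuclideanSpace ℝ (Fin 2)) 1, (‖x - y‖ ^ (-(2 * (1 - s))) - 1)
      ≤ ∫ y in Metric.ball x 1, (‖x - y‖ ^ (-(2 * (1 - s))) - 1) := by
    rw [← integral_indicator measurableSet_ball, ← integral_indicator measurableSet_ball]
    apply integral_mono ((integrable_indicator_iff measurableSet_ball).2 (i1.sub (c 0)))
      ((integrable_indicator_iff measurableSet_ball).2 (i2.sub (c x)))
    classical
    intro y
    rcases eq_or_ne y x with rfl | hy
    · simp [Set.indicator_apply, hx]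
    have hpos : 0 < ‖x - y‖ := norm_pos_iff.2 (sub_ne_zero.2 hy.symm)
    by_cases hb : ‖x - y‖ < 1
    · have := Real.one_le_rpow_of_pos_of_le_one_of_nonpos hpos hb.le
        (show -(2 * (1 - s)) ≤ 0 by linarith)
      have hm : y ∈ Metric.ball x 1 := by rwa [Metric.mem_ball, dist_comm, dist_eq_norm]
      rw [Set.indicator_of_mem hm, Set.indicator_apply]
      simp only [Pi.sub_apply]
      split_ifs <;> linarith
    · have := Real.rpow_le_one_of_one_le_of_nonpos (not_lt.1 hb)
        (show -(2 * (1 - s)) ≤ 0 by linarith)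
      have hm : y ∉ Metric.ball x 1 := by rwa [Metric.mem_ball, dist_comm, dist_eq_norm]
      rw [Set.indicator_of_notMem hm, Set.indicator_apply]
      simp only [Pi.sub_apply]
      split_ifs <;> linarith
  rw [integral_sub i1 (c 0), integral_sub i2 (c x), h1] at key
  simp only [setIntegral_const, aux_vol, Real.one_rpow, smul_eq_mul, mul_one] at key
  linarith

lemma aux_lowval : ∫ x in Metric.ball (0 : EuclideanSpace ℝ (Fin 2)) 1, (1 - ‖x‖) ^ 2 = π / 6 := by
  have e : (Metric.ball (0 : EuclideanSpace ℝ (Fin 2)) 1).indicator (fun z => (1 - ‖z‖) ^ 2)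
      = fun z => (Set.Iio 1).indicator (fun r : ℝ => (1 - r) ^ 2) ‖z‖ := by
    classical
    ext z
    simp [Set.indicator_apply]
  have e2 : (fun y : ℝ => y ^ (2 - 1) • (Set.Iio 1).indicator (fun r : ℝ => (1 - r) ^ 2) y)
      = (Set.Iio 1).indicator (fun r : ℝ => r - 2 * r ^ 2 + r ^ 3) := by
    ext y
    simp only [Set.indicator_apply]
    split_ifs <;> simp
    ring
  rw [← integral_indicator measurableSet_ball, e, integral_fun_norm_addHaar]
  simp only [finrank_euclideanSpace, Fintype.card_fin]
  rw [e2, integral_indicator measurableSet_Iio,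
    Measure.restrict_restrict measurableSet_Iio, Set.inter_comm, Set.Ioi_inter_Iio,
    ← integral_Ioc_eq_integral_Ioo, ← intervalIntegral.integral_of_le zero_le_one, aux_vol]
  rw [intervalIntegral.integral_add, intervalIntegral.integral_sub,
    intervalIntegral.integral_const_mul, integral_id, integral_pow, integral_pow]
  · simp; ring
  all_goals exact Continuous.intervalIntegrable (by fun_prop) _ _

theorem Is_bounds (s : ℝ) (hs0 : 0 < s) (hs1 : s < 1)
    (Is : ℝ)
    (hIs : Is = (1 / π ^ 2) *
      ∫ x in Metric.ball (0 : EuclideanSpace ℝ (Fin 2)) 1,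
        ∫ y in Metric.ball (0 : EuclideanSpace ℝ (Fin 2)) 1,
          ‖x - y‖ ^ (-(2 * (1 - s)))) :
    1 / 6 ≤ s * Is ∧ s * Is ≤ 1 := by
  set F : EuclideanSpace ℝ (Fin 2) → ℝ := fun x =>
    ∫ y in Metric.ball (0 : EuclideanSpace ℝ (Fin 2)) 1, ‖x - y‖ ^ (-(2 * (1 - s))) with hF
  have hm : StronglyMeasurable F := by
    apply StronglyMeasurable.integral_prod_right
      (f := fun x y : EuclideanSpace ℝ (Fin 2) => ‖x - y‖ ^ (-(2 * (1 - s))))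
    apply Measurable.stronglyMeasurable
    unfold Function.uncurry
    fun_prop
  have hfin : IntegrableOn (fun _ : EuclideanSpace ℝ (Fin 2) => π / s) (Metric.ball 0 1) :=
    integrableOn_const measure_ball_lt_top.ne
  have hi : IntegrableOn F (Metric.ball 0 1) := by
    refine Integrable.mono' hfin hm.aestronglyMeasurable ?_
    refine (ae_restrict_iff' measurableSet_ball).2 (Filter.Eventually.of_forall fun x hx => ?_)
    have hx' : ‖x‖ < 1 := by simpa using hx
    rw [Real.norm_of_nonneg (integral_nonneg fun y => by positivity)]
    exact aux_upper s hs0 hs1 x hx'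
  have hup : ∫ x in Metric.ball (0 : EuclideanSpace ℝ (Fin 2)) 1, F x ≤ π * (π / s) := by
    have := setIntegral_mono_on hi hfin measurableSet_ball
      (fun x hx => aux_upper s hs0 hs1 x (by simpa using hx))
    simpa [setIntegral_const, aux_vol] using this
  have hlo : π / s * (π / 6) ≤ ∫ x in Metric.ball (0 : EuclideanSpace ℝ (Fin 2)) 1, F x := by
    rw [← aux_lowval, ← integral_const_mul]
    refine setIntegral_mono_on ?_ hi measurableSet_ball
      (fun x hx => aux_lower s hs0 hs1 x (by simpa using hx))
    refine IntegrableOn.mono_set (t := Metric.closedBall 0 1) ?_ Metric.ball_subset_closedBall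
    exact (Continuous.continuousOn (by fun_prop)).integrableOn_compact (isCompact_closedBall _ _)
  have hpi := Real.pi_pos
  rw [hIs]
  constructor
  · calc (1:ℝ) / 6 = s * (1 / π ^ 2 * (π / s * (π / 6))) := by field_simp
      _ ≤ _ := by gcongr
  · calc _ ≤ s * (1 / π ^ 2 * (π * (π / s))) := by gcongr
      _ = 1 := by field_simp
end

section
/- Let f be even, nonnegative, non-increasing on [0,∞), and integrable on ℝ, and let g : ℝ → [0,1] be even and non-increasing on [0,∞) with ∫g < ∞. Then the convolution f∗g is even and non-increasing on [0,∞). -/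
open Real MeasureTheory

theorem convolution_symmetric_decreasing
    (f : ℝ → ℝ) (hf_int : Integrable f) (hf0 : ∀ x, 0 ≤ f x)
    (hf_even : ∀ x, f (-x) = f x) (hf_anti : AntitoneOn f (Set.Ici 0))
    (g : ℝ → ℝ) (hg0 : ∀ x, 0 ≤ g x) (hg1 : ∀ x, g x ≤ 1)
    (hg_even : ∀ x, g (-x) = g x) (hg_anti : AntitoneOn g (Set.Ici 0))
    (hg_int : Integrable g) :
    (∀ x, (∫ y, f (x - y) * g y) = ∫ y, f (-x - y) * g y) ∧
      AntitoneOn (fun x => ∫ y, f (x - y) * g y) (Set.Ici 0) := by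
  have key : ∀ h : ℝ → ℝ, (∀ x, h (-x) = h x) → AntitoneOn h (Set.Ici 0) →
      ∀ x y, |x| ≤ |y| → h y ≤ h x := by
    intro h he ha x y hxy
    have habs : ∀ z, h |z| = h z := by
      intro z
      rcases abs_choice z with hz | hz <;> rw [hz]
      exact he z
    rw [← habs x, ← habs y]
    exact ha (abs_nonneg x) (abs_nonneg y) hxy
  have hI : ∀ a, Integrable (fun y => f (a - y) * g y) := by
    intro a
    refine (hf_int.comp_sub_left a).mul_bdd (c := 1) hg_int.aestronglyMeasurable ?_
    filter_upwards with y
    rw [Real.norm_of_nonneg (hg0 y)]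
    exact hg1 y
  refine ⟨fun x => ?_, fun a ha b hb hab => ?_⟩
  · rw [← integral_neg_eq_self (fun y => f (x - y) * g y)]
    refine integral_congr_ae (Filter.Eventually.of_forall fun y => ?_)
    simp only
    rw [hg_even, ← hf_even]
    congr 2
    ring
  · have e1 : ∀ y, f (a - (a + b - y)) = f (b - y) := fun y => by
      rw [← hf_even]; congr 1; ring
    have e2 : ∀ y, f (b - (a + b - y)) = f (a - y) := fun y => by
      rw [← hf_even]; congr 1; ring
    have i1 := (hI a).comp_sub_left (a + b)
    have i2 := (hI b).comp_sub_left (a + b)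
    have r1 := integral_sub_left_eq_self (fun y => f (a - y) * g y) volume (a + b)
    have r2 := integral_sub_left_eq_self (fun y => f (b - y) * g y) volume (a + b)
    simp only [e1, e2] at i1 i2 r1 r2
    have hpos : 0 ≤ ∫ y, ((f (a - y) * g y - f (b - y) * g y) +
        (f (b - y) * g (a + b - y) - f (a - y) * g (a + b - y))) := by
      refine integral_nonneg fun y => ?_
      have hab' : 0 ≤ a + b := add_nonneg ha hb
      simp only [Pi.zero_apply]
      rcases le_total (2 * y) (a + b) with h | h
      · have h1 := key f hf_even hf_anti (a - y) (b - y)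
          (sq_le_sq.1 (by nlinarith))
        have h2 := key g hg_even hg_anti y (a + b - y)
          (sq_le_sq.1 (by nlinarith))
        nlinarith [mul_nonneg (sub_nonneg.2 h1) (sub_nonneg.2 h2)]
      · have h1 := key f hf_even hf_anti (b - y) (a - y)
          (sq_le_sq.1 (by nlinarith))
        have h2 := key g hg_even hg_anti (a + b - y) y
          (sq_le_sq.1 (by nlinarith))
        nlinarith [mul_nonneg (sub_nonneg.2 h1) (sub_nonneg.2 h2)]
    have j1 : Integrable (fun y => f (a - y) * g y - f (b - y) * g y) := (hI a).sub (hI b)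
    have j2 : Integrable (fun y => f (b - y) * g (a + b - y) - f (a - y) * g (a + b - y)) :=
      i1.sub i2
    rw [integral_add j1 j2, integral_sub (hI a) (hI b),
      integral_sub i1 i2, r1, r2] at hpos
    simp only
    linarith
end

section
/- Let N ≥ 2, s ∈ [0,1], ρ ∈ (0,1), and Φ(ξ) := Σ_{n=0}^{N-1} sin(ξ - 2πn/N)·(1 - ρ·cos(ξ - 2πn/N))^{-(2-s)}. Then there exists a continuous, positive, 2π/N-periodic function F : ℝ → ℝ such that Φ(ξ) = sin(Nξ)·F(ξ) for all ξ ∈ ℝ. -/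
open Real Finset

lemma kf_prod_roots (N : ℕ) (hN : 0 < N) (ζ : ℂ) (h : IsPrimitiveRoot ζ N) (x y : ℂ) :
    ∏ n ∈ range N, (x - ζ ^ n * y) = x ^ N - y ^ N := by
  classical
  rw [h.pow_sub_pow_eq_prod_sub_mul x y hN, Polynomial.nthRootsFinset,
    h.nthRoots_eq (α := 1) (one_pow N)]
  have : ((Multiset.range N).map (fun n => ζ ^ n * 1)).toFinset = (range N).image (fun n => ζ ^ n) := by
    ext; simp
  rw [this, prod_image]
  intro a ha b hb hab
  exact h.pow_inj (by simpa using ha) (by simpa using hb) hab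

lemma kf_prod (N : ℕ) (hN : 0 < N) (l : ℝ) (hl : 1 < l) : ∃ A : ℝ, ∀ ξ : ℝ,
    ∏ n ∈ range N, (l - cos (ξ - 2 * π * n / N)) = A - 2 / 2 ^ N * cos (N * ξ) := by
  obtain ⟨z, hz, hzl⟩ : ∃ z : ℝ, 0 < z ∧ 2 * z * l = z ^ 2 + 1 := by
    have h := Real.sq_sqrt (show 0 ≤ l ^ 2 - 1 by nlinarith)
    refine ⟨l + √(l ^ 2 - 1), by positivity, by nlinarith⟩
  refine ⟨(z ^ (2 * N) + 1) / (2 * z) ^ N, fun ξ => ?_⟩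
  have hN0 : (N : ℂ) ≠ 0 := by exact_mod_cast hN.ne'
  have hz0 : (z : ℂ) ≠ 0 := by exact_mod_cast hz.ne'
  have hp := Complex.isPrimitiveRoot_exp N hN.ne'
  have h1 := kf_prod_roots N hN _ hp z (Complex.exp (-(ξ * Complex.I)))
  have h2 := kf_prod_roots N hN _ hp.inv z (Complex.exp (ξ * Complex.I))
  have h3 : ((∏ n ∈ range N, (l - cos (ξ - 2 * π * n / N)) : ℝ) : ℂ) * (2 * z) ^ N =
      ((z : ℂ) ^ N - Complex.exp (-(ξ * Complex.I)) ^ N) *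
      ((z : ℂ) ^ N - Complex.exp (ξ * Complex.I) ^ N) := by
    rw [← h1, ← h2, ← prod_mul_distrib]
    have : ((2 : ℂ) * z) ^ N = ∏ n ∈ range N, (2 * (z : ℂ)) := by simp
    rw [this]
    push_cast
    rw [← prod_mul_distrib]
    refine prod_congr rfl fun n _ => ?_
    have e1 : Complex.exp (2 * π * Complex.I / N) ^ n * Complex.exp (-(ξ * Complex.I)) =
        Complex.exp (-((ξ - 2 * π * n / N) * Complex.I)) := by
      rw [← Complex.exp_nat_mul, ← Complex.exp_add]; congr 1; ring
    have e2 : (Complex.exp (2 * π * Complex.I / N))⁻¹ ^ n * Complex.exp (ξ * Complex.I) =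
        Complex.exp ((ξ - 2 * π * n / N) * Complex.I) := by
      rw [← Complex.exp_neg, ← Complex.exp_nat_mul, ← Complex.exp_add]; congr 1; ring
    rw [e1, e2, Complex.cos]
    have e3 : Complex.exp (-((ξ - 2 * π * n / N) * Complex.I)) *
      Complex.exp ((ξ - 2 * π * n / N) * Complex.I) = 1 := by
      rw [← Complex.exp_add]; simp
    have hzl' : 2 * (z : ℂ) * l = z ^ 2 + 1 := by exact_mod_cast hzl
    rw [neg_mul]
    linear_combination hzl' - e3
  have e4 : Complex.exp (-(ξ * Complex.I)) ^ N * Complex.exp (ξ * Complex.I) ^ N = 1 := by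
    rw [← mul_pow, ← Complex.exp_add]; simp
  have e5 : Complex.exp (-(ξ * Complex.I)) ^ N + Complex.exp (ξ * Complex.I) ^ N =
      2 * Complex.cos (N * ξ) := by
    rw [← Complex.exp_nat_mul, ← Complex.exp_nat_mul, Complex.cos]
    rw [show (N : ℂ) * -(ξ * Complex.I) = -(N * ξ) * Complex.I by ring,
      show (N : ℂ) * (ξ * Complex.I) = (N * ξ) * Complex.I by ring]
    ring
  have h4 : (∏ n ∈ range N, (l - cos (ξ - 2 * π * n / N))) * (2 * z) ^ N =
      z ^ (2 * N) + 1 - 2 * z ^ N * cos (N * ξ) := by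
    have : ((∏ n ∈ range N, (l - cos (ξ - 2 * π * n / N)) : ℝ) : ℂ) * (2 * z) ^ N =
      z ^ (2 * N) + 1 - 2 * z ^ N * Complex.cos (N * ξ) := by
      rw [h3]; linear_combination e4 - (z : ℂ) ^ N * e5
    exact_mod_cast this
  rw [eq_comm, ← mul_left_inj' (show (2 * z) ^ N ≠ 0 by positivity), h4, mul_pow]
  field_simp

lemma kf_deriv_prod (N : ℕ) (f f' : ℕ → ℝ → ℝ) (x : ℝ)
    (h : ∀ n, HasDerivAt (f n) (f' n x) x) (h0 : ∀ n, f n x ≠ 0) :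
    HasDerivAt (fun y => ∏ n ∈ range N, f n y)
      ((∏ n ∈ range N, f n x) * ∑ n ∈ range N, f' n x / f n x) x := by
  induction N with
  | zero => simpa using hasDerivAt_const x (1 : ℝ)
  | succ k ih =>
    simp only [prod_range_succ, sum_range_succ]
    refine (HasDerivAt.fun_mul ih (h k)).congr_deriv ?_
    have := h0 k
    rw [mul_add, mul_right_comm]
    congr 1
    field_simp

lemma kf_cos_lt {l : ℝ} (hl : 1 < l) (x : ℝ) : 0 < l - cos x := by
  linarith [cos_le_one x]

lemma kf_S1 (N : ℕ) (hN : 0 < N) (l : ℝ) (hl : 1 < l) (ξ : ℝ) :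
    ∑ n ∈ range N, sin (ξ - 2 * π * n / N) / (l - cos (ξ - 2 * π * n / N)) =
      2 / 2 ^ N * N * sin (N * ξ) * (∏ n ∈ range N, (l - cos (ξ - 2 * π * n / N)))⁻¹ := by
  obtain ⟨A, hA⟩ := kf_prod N hN l hl
  have h1 := kf_deriv_prod N (fun n ξ => l - cos (ξ - 2 * π * n / N))
    (fun n ξ => sin (ξ - 2 * π * n / N)) ξ (fun n => by
      have := ((hasDerivAt_id ξ).sub_const (2 * π * n / N)).cos.const_sub l
      simpa using this) (fun n => (kf_cos_lt hl _).ne')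
  simp only [hA] at h1
  have h2 : HasDerivAt (fun ξ : ℝ => A - 2 / 2 ^ N * cos (N * ξ))
      (2 / 2 ^ N * N * sin (N * ξ)) ξ := by
    have := (((hasDerivAt_id ξ).const_mul (N : ℝ)).cos.const_mul (2 / 2 ^ N : ℝ)).const_sub A
    refine this.congr_deriv ?_
    simp; ring
  have h3 := h1.unique h2
  rw [← hA] at h3
  have : (∏ n ∈ range N, (l - cos (ξ - 2 * π * n / N))) ≠ 0 :=
    (prod_pos fun n _ => kf_cos_lt hl _).ne'
  rw [eq_mul_inv_iff_mul_eq₀ this, ← h3]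
  exact mul_comm _ _

noncomputable def kfG (N : ℕ) (l ξ : ℝ) : ℝ :=
  (∏ n ∈ range N, (l - cos (ξ - 2 * π * n / N)))⁻¹ *
    ∑ n ∈ range N, 1 / (l - cos (ξ - 2 * π * n / N))

lemma kf_S2 (N : ℕ) (hN : 0 < N) (l : ℝ) (hl : 1 < l) (ξ : ℝ) :
    ∑ n ∈ range N, sin (ξ - 2 * π * n / N) / (l - cos (ξ - 2 * π * n / N)) ^ 2 =
      2 / 2 ^ N * N * sin (N * ξ) * kfG N l ξ := by
  have h1 := kf_deriv_prod N (fun n l => l - cos (ξ - 2 * π * n / N))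
    (fun n ξ => 1) l (fun n => (hasDerivAt_id l).sub_const _) (fun n => (kf_cos_lt hl _).ne')
  have hP : (∏ n ∈ range N, (l - cos (ξ - 2 * π * n / N))) ≠ 0 :=
    (prod_pos fun n _ => kf_cos_lt hl _).ne'
  have h2 := (h1.inv hP).const_mul (2 / 2 ^ N * N * sin (N * ξ))
  have h3 : HasDerivAt (fun l => ∑ n ∈ range N,
      sin (ξ - 2 * π * n / N) / (l - cos (ξ - 2 * π * n / N)))
      (∑ n ∈ range N, -(sin (ξ - 2 * π * n / N) / (l - cos (ξ - 2 * π * n / N)) ^ 2)) l := by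
    refine HasDerivAt.fun_sum fun n _ => ?_
    have := (((hasDerivAt_id l).sub_const (cos (ξ - 2 * π * n / N))).inv
      (kf_cos_lt hl _).ne').const_mul (sin (ξ - 2 * π * n / N))
    refine this.congr_deriv ?_
    simp; ring
  have h4 := h3.congr_of_eventuallyEq (f₁ := fun l => 2 / 2 ^ N * N * sin (N * ξ) *
      (∏ n ∈ range N, (l - cos (ξ - 2 * π * n / N)))⁻¹) (by
    filter_upwards [lt_mem_nhds hl] with y hy
    exact (kf_S1 N hN y hy ξ).symm)
  have h5 := h4.unique h2
  rw [sum_neg_distrib] at h5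
  rw [← neg_inj, h5, kfG]
  field_simp

lemma kf_period_sum (N : ℕ) (hN : 0 < N) (f : ℝ → ℝ) (hf : ∀ x, f (x - 2 * π) = f x) (ξ : ℝ) :
    ∑ n ∈ range N, f (ξ + 2 * π / N - 2 * π * n / N) = ∑ n ∈ range N, f (ξ - 2 * π * n / N) := by
  obtain ⟨M, rfl⟩ : ∃ M, N = M + 1 := ⟨N - 1, by omega⟩
  rw [sum_range_succ', sum_range_succ]
  congr 1
  · refine sum_congr rfl fun n _ => ?_
    congr 1; push_cast; ring
  · rw [← hf]; congr 1; push_cast; field_simp; ring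

lemma kf_period_prod (N : ℕ) (hN : 0 < N) (f : ℝ → ℝ) (hf : ∀ x, f (x - 2 * π) = f x) (ξ : ℝ) :
    ∏ n ∈ range N, f (ξ + 2 * π / N - 2 * π * n / N) = ∏ n ∈ range N, f (ξ - 2 * π * n / N) := by
  obtain ⟨M, rfl⟩ : ∃ M, N = M + 1 := ⟨N - 1, by omega⟩
  rw [prod_range_succ', prod_range_succ]
  congr 1
  · refine prod_congr rfl fun n _ => ?_
    congr 1; push_cast; ring
  · rw [← hf]; congr 1; push_cast; field_simp; ring

lemma kfG_period (N : ℕ) (hN : 0 < N) (l ξ : ℝ) : kfG N l (ξ + 2 * π / N) = kfG N l ξ := by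
  unfold kfG
  rw [kf_period_sum N hN (fun x => 1 / (l - cos x)) (by simp),
    kf_period_prod N hN (fun x => l - cos x) (by simp)]

lemma kfG_pos (N : ℕ) (hN : 0 < N) (l ξ : ℝ) (hl : 1 < l) : 0 < kfG N l ξ := by
  unfold kfG
  refine mul_pos (inv_pos.2 (prod_pos fun n _ => kf_cos_lt hl _)) (sum_pos (fun n _ =>
    one_div_pos.2 (kf_cos_lt hl _)) (by simpa using hN.ne'))

lemma kfG_cont (N : ℕ) (l : ℝ) (hl : 1 < l) : Continuous (fun ξ => kfG N l ξ) := by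
  unfold kfG
  refine Continuous.mul (Continuous.inv₀ (by fun_prop)
    fun ξ => (prod_pos fun n _ => kf_cos_lt hl _).ne') (continuous_finsetSum _ fun n _ => ?_)
  exact continuous_const.div (by fun_prop) fun ξ => (kf_cos_lt hl _).ne'

lemma kfG_bound (N : ℕ) (hN : 0 < N) (l ξ d : ℝ) (hd : 0 < d) (hl : 1 + d ≤ l) :
    kfG N l ξ ≤ (N / d ^ (N - 1)) / (l - 1) ^ 2 := by
  have h1 : ((l - 1) ^ N) ≤ ∏ n ∈ range N, (l - cos (ξ - 2 * π * n / N)) := by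
    calc (l - 1) ^ N = ∏ n ∈ range N, (l - 1) := by simp
      _ ≤ _ := prod_le_prod (fun _ _ => by linarith) fun n _ => by
        linarith [cos_le_one (ξ - 2 * π * n / N)]
  have h2 : ∑ n ∈ range N, 1 / (l - cos (ξ - 2 * π * n / N)) ≤ N * (1 / (l - 1)) := by
    calc _ ≤ ∑ n ∈ range N, 1 / (l - 1) := sum_le_sum fun n _ =>
          one_div_le_one_div_of_le (by linarith) (by linarith [cos_le_one (ξ - 2 * π * n / N)])
      _ = _ := by simp
  have hp : 0 < l - 1 := by linarith
  have h3 : d ^ (N - 1) * (l - 1) ≤ (l - 1) ^ N := by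
    obtain ⟨M, rfl⟩ : ∃ M, N = M + 1 := ⟨N - 1, by omega⟩
    rw [pow_succ]; simp only [Nat.add_sub_cancel]
    gcongr; linarith
  unfold kfG
  calc _ ≤ (d ^ (N - 1) * (l - 1))⁻¹ * (N * (1 / (l - 1))) := by
        refine mul_le_mul (inv_anti₀ (by positivity) (h3.trans h1)) h2 ?_ (by positivity)
        exact sum_nonneg fun n _ => (one_div_pos.2 (kf_cos_lt (by linarith) _)).le
    _ = _ := by field_simp

open MeasureTheory in
lemma kf_integrable (p c : ℝ) (hp : -1 < p) (hp0 : p < 0) (hc : 0 < c) :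
    IntegrableOn (fun t : ℝ => t ^ p * (1 / (t + c) ^ 2)) (Set.Ioi 0) := by
  have hm : Measurable (fun t : ℝ => t ^ p * (1 / (t + c) ^ 2)) := by fun_prop
  rw [← Set.Ioc_union_Ioi_eq_Ioi (zero_le_one' ℝ)]
  refine IntegrableOn.union ?_ ?_
  · have h := (intervalIntegrable_iff_integrableOn_Ioc_of_le (zero_le_one' ℝ)).1
      (intervalIntegral.intervalIntegrable_rpow' (a := 0) (b := 1) hp)
    refine Integrable.mono' (h.mul_const (1 / c ^ 2)) hm.aestronglyMeasurable ?_
    refine (ae_restrict_iff' measurableSet_Ioc).2 (Filter.Eventually.of_forall fun t ht => ?_)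
    have ht0 := ht.1
    rw [Real.norm_of_nonneg (by positivity)]
    gcongr
    linarith
  · refine Integrable.mono' (integrableOn_Ioi_rpow_of_lt (a := p - 2) (by linarith) one_pos)
      hm.aestronglyMeasurable ?_
    refine (ae_restrict_iff' measurableSet_Ioi).2 (Filter.Eventually.of_forall fun t ht => ?_)
    have ht1 : 1 < t := ht
    have ht0 : 0 < t := by linarith
    rw [Real.norm_of_nonneg (by positivity), Real.rpow_sub ht0, div_eq_mul_one_div (t ^ p)]
    rw [Real.rpow_two]
    gcongr
    linarith

lemma kf_scale (p c : ℝ) (hc : 0 < c) :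
    ∫ t in Set.Ioi (0:ℝ), t ^ p * (1 / (t + c) ^ 2) =
      c ^ (p - 1) * ∫ t in Set.Ioi (0:ℝ), t ^ p * (1 / (t + 1) ^ 2) := by
  have h := MeasureTheory.integral_comp_mul_left_Ioi' (fun t : ℝ => t ^ p * (1 / (t + c) ^ 2)) 0 hc
  rw [mul_zero] at h
  rw [← h, smul_eq_mul, ← MeasureTheory.integral_const_mul, ← MeasureTheory.integral_const_mul]
  refine MeasureTheory.setIntegral_congr_fun measurableSet_Ioi fun t ht => ?_
  have ht0 : 0 < t := ht
  rw [Real.mul_rpow hc.le ht0.le, Real.rpow_sub hc, Real.rpow_one]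
  have : c * t + c = c * (t + 1) := by ring
  rw [this]
  field_simp

open MeasureTheory in
lemma kf_pos_integral (f : ℝ → ℝ) (hf : ∀ t, 0 < t → 0 < f t)
    (hi : IntegrableOn f (Set.Ioi 0)) : 0 < ∫ t in Set.Ioi (0:ℝ), f t := by
  rw [setIntegral_pos_iff_support_of_nonneg_ae _ hi]
  · have : Function.support f ∩ Set.Ioi 0 = Set.Ioi 0 :=
      Set.inter_eq_right.2 fun t ht => (hf t ht).ne'
    rw [this]; simp
  · exact (ae_restrict_iff' measurableSet_Ioi).2
      (Filter.Eventually.of_forall fun t ht => (hf t ht).le)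

open MeasureTheory in
lemma kf_core (N : ℕ) (hN : 0 < N) (l a : ℝ) (hl : 1 < l) (ha1 : 1 < a) (ha2 : a < 2) :
    ∃ F : ℝ → ℝ, Continuous F ∧ (∀ ξ, 0 < F ξ) ∧ (∀ ξ, F (ξ + 2 * π / N) = F ξ) ∧
      ∀ ξ : ℝ, (∑ n ∈ range N, sin (ξ - 2 * π * n / N) *
        (l - cos (ξ - 2 * π * n / N)) ^ (-a)) = sin (N * ξ) * F ξ := by
  set J := ∫ t in Set.Ioi (0:ℝ), t ^ (1 - a) * (1 / (t + 1) ^ 2) with hJ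
  have hJ0 : 0 < J := kf_pos_integral _ (fun t ht => by positivity)
    (kf_integrable _ 1 (by linarith) (by linarith) one_pos)
  have hN' : (0:ℝ) < N := by exact_mod_cast hN
  have hm : ∀ ξ, AEStronglyMeasurable (fun t : ℝ => t ^ (1 - a) * kfG N (l + t) ξ)
      (volume.restrict (Set.Ioi 0)) := fun ξ => by
    refine Measurable.aestronglyMeasurable ?_
    unfold kfG
    fun_prop
  have hbi : Integrable (fun t : ℝ => t ^ (1 - a) * (1 / (t + (l - 1)) ^ 2) *
      (N / (l - 1) ^ (N - 1))) (volume.restrict (Set.Ioi 0)) :=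
    (kf_integrable _ (l - 1) (by linarith) (by linarith) (by linarith)).mul_const _
  have hb : ∀ ξ, ∀ᵐ t ∂(volume.restrict (Set.Ioi (0:ℝ))),
      ‖t ^ (1 - a) * kfG N (l + t) ξ‖ ≤ t ^ (1 - a) * (1 / (t + (l - 1)) ^ 2) *
      (N / (l - 1) ^ (N - 1)) := fun ξ => by
    refine (ae_restrict_iff' measurableSet_Ioi).2 (Filter.Eventually.of_forall fun t ht => ?_)
    have ht0 : 0 < t := ht
    have h1 := kfG_pos N hN (l + t) ξ (by linarith)
    have h2 := kfG_bound N hN (l + t) ξ (l - 1) (by linarith) (by linarith)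
    rw [Real.norm_of_nonneg (by positivity), mul_assoc]
    refine mul_le_mul_of_nonneg_left (h2.trans (le_of_eq ?_)) (by positivity)
    rw [show l + t - 1 = t + (l - 1) by ring]
    ring
  have hi : ∀ ξ, IntegrableOn (fun t : ℝ => t ^ (1 - a) * kfG N (l + t) ξ) (Set.Ioi 0) :=
    fun ξ => Integrable.mono' hbi (hm ξ) (hb ξ)
  refine ⟨fun ξ => 2 / 2 ^ N * N / J * ∫ t in Set.Ioi (0:ℝ), t ^ (1 - a) * kfG N (l + t) ξ,
    ?_, ?_, ?_, ?_⟩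
  · refine continuous_const.mul (continuous_of_dominated hm hb hbi ?_)
    refine (ae_restrict_iff' measurableSet_Ioi).2 (Filter.Eventually.of_forall fun t ht => ?_)
    have ht0 : 0 < t := ht
    exact continuous_const.mul (kfG_cont N (l + t) (by linarith))
  · intro ξ
    refine mul_pos (by positivity) (kf_pos_integral _ (fun t ht => ?_) (hi ξ))
    have := kfG_pos N hN (l + t) ξ (by linarith)
    positivity
  · intro ξ
    simp only [kfG_period N hN]
  · intro ξ
    have h1 : ∀ n : ℕ, (l - cos (ξ - 2 * π * n / N)) ^ (-a) =
        (∫ t in Set.Ioi (0:ℝ), t ^ (1 - a) * (1 / (t + (l - cos (ξ - 2 * π * n / N))) ^ 2)) / J := by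
      intro n
      rw [kf_scale _ _ (kf_cos_lt hl _), ← hJ, mul_div_cancel_right₀ _ hJ0.ne']
      congr 1; ring
    have h2 : ∫ t in Set.Ioi (0:ℝ), ∑ n ∈ range N, sin (ξ - 2 * π * n / N) *
          (t ^ (1 - a) * (1 / (t + (l - cos (ξ - 2 * π * n / N))) ^ 2)) =
        ∫ t in Set.Ioi (0:ℝ), (2 / 2 ^ N * N * sin (N * ξ)) * (t ^ (1 - a) * kfG N (l + t) ξ) := by
      refine setIntegral_congr_fun measurableSet_Ioi fun t ht => ?_
      have ht0 : 0 < t := ht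
      have h3 := kf_S2 N hN (l + t) (by linarith) ξ
      rw [mul_left_comm, ← h3, mul_sum]
      refine sum_congr rfl fun n _ => ?_
      rw [show t + (l - cos (ξ - 2 * π * n / N)) = l + t - cos (ξ - 2 * π * n / N) by ring]
      ring
    rw [integral_finsetSum, integral_const_mul] at h2
    · simp only [integral_const_mul] at h2
      simp only [h1]
      have h4 : ∀ x y z w : ℝ, x * (y / z * w) = y * x * w / z := fun x y z w => by ring
      rw [h4, ← h2, sum_div]
      exact sum_congr rfl fun n _ => (mul_div_assoc _ _ _).symm
    · intro n _
      exact (kf_integrable _ _ (by linarith) (by linarith) (kf_cos_lt hl _)).const_mul _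

lemma kf_all (N : ℕ) (hN : 0 < N) (l a : ℝ) (hl : 1 < l) (ha1 : 1 ≤ a) (ha2 : a ≤ 2) :
    ∃ F : ℝ → ℝ, Continuous F ∧ (∀ ξ, 0 < F ξ) ∧ (∀ ξ, F (ξ + 2 * π / N) = F ξ) ∧
      ∀ ξ : ℝ, (∑ n ∈ range N, sin (ξ - 2 * π * n / N) *
        (l - cos (ξ - 2 * π * n / N)) ^ (-a)) = sin (N * ξ) * F ξ := by
  have hN' : (0:ℝ) < N := by exact_mod_cast hN
  rcases ha1.eq_or_lt with rfl | h1
  · refine ⟨fun ξ => 2 / 2 ^ N * N * (∏ n ∈ range N, (l - cos (ξ - 2 * π * n / N)))⁻¹,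
      ?_, ?_, ?_, ?_⟩
    · exact continuous_const.mul (Continuous.inv₀ (by fun_prop)
        fun ξ => (prod_pos fun n _ => kf_cos_lt hl _).ne')
    · intro ξ
      exact mul_pos (by positivity) (inv_pos.2 (prod_pos fun n _ => kf_cos_lt hl _))
    · intro ξ
      simp only [kf_period_prod N hN (fun x => l - cos x) (by simp)]
    · intro ξ
      simp only [Real.rpow_neg_one, ← div_eq_mul_inv]
      rw [kf_S1 N hN l hl]
      ring
  rcases ha2.eq_or_lt with rfl | h2
  · refine ⟨fun ξ => 2 / 2 ^ N * N * kfG N l ξ, continuous_const.mul (kfG_cont N l hl), ?_, ?_, ?_⟩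
    · intro ξ
      exact mul_pos (by positivity) (kfG_pos N hN l ξ hl)
    · intro ξ
      simp only [kfG_period N hN]
    · intro ξ
      simp only [Real.rpow_neg (kf_cos_lt hl _).le, Real.rpow_two, ← div_eq_mul_inv]
      rw [kf_S2 N hN l hl]
      ring
  exact kf_core N hN l a hl h1 h2

theorem kernel_factorization (N : ℕ) (hN : 2 ≤ N) (s ρ : ℝ)
    (hs0 : 0 ≤ s) (hs1 : s ≤ 1) (hρ0 : 0 < ρ) (hρ1 : ρ < 1) :
    ∃ F : ℝ → ℝ, Continuous F ∧ (∀ ξ, 0 < F ξ) ∧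
      (∀ ξ, F (ξ + 2 * π / N) = F ξ) ∧
      ∀ ξ : ℝ,
        (∑ n ∈ Finset.range N,
          Real.sin (ξ - 2 * π * n / N) *
            (1 - ρ * Real.cos (ξ - 2 * π * n / N)) ^ (-(2 - s))) =
        Real.sin (N * ξ) * F ξ := by
  have hl : 1 < 1 / ρ := by rw [lt_div_iff₀ hρ0]; linarith
  obtain ⟨F, hc, hp, hper, hF⟩ := kf_all N (by omega) (1 / ρ) (2 - s) hl (by linarith) (by linarith)
  refine ⟨fun ξ => ρ ^ (-(2 - s)) * F ξ, continuous_const.mul hc,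
    fun ξ => mul_pos (Real.rpow_pos_of_pos hρ0 _) (hp ξ), fun ξ => by simp only [hper], fun ξ => ?_⟩
  rw [mul_left_comm, ← hF, mul_sum]
  refine sum_congr rfl fun n _ => ?_
  rw [mul_left_comm, ← Real.mul_rpow hρ0.le (kf_cos_lt hl _).le]
  congr 2
  field_simp
end
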